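/- arXiv:2601.02762 — 2 statements merged into one kernel-verified Lean document; each statement's English description precedes it below -/
import Mathlib

section
/- Let L be a symmetric positive-definite n×n real matrix whose smallest eigenvalue is ℓ > 0, let w : ℝ → ℝⁿ be continuous with ‖w(t)‖ ≤ D for all t ≥ 0, and let y : ℝ → ℝⁿ be differentiable with y'(t) = −L y(t) − w(t) for all t ≥ 0. Then for all t ≥ 0, ‖y(t)‖ ≤ e^{−ℓ t} ‖y(0)‖ + (D/ℓ)(1 − e^{−ℓ t}). -/
open Matrix

/-- **Rayleigh bound**: a lower bound for the eigenvalues of a Hermitian real matrix is a lower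
bound for its quadratic form on unit vectors. -/
theorem Matrix.IsHermitian.mul_norm_sq_le_inner_toEuclideanLin {ι : Type*} [Fintype ι]
    [DecidableEq ι] {A : Matrix ι ι ℝ} (hA : A.IsHermitian) {c : ℝ}
    (hc : ∀ i, c ≤ hA.eigenvalues i) (v : EuclideanSpace ℝ ι) :
    c * ‖v‖ ^ 2 ≤ inner ℝ v (toEuclideanLin A v) := by
  have hsymm : (toEuclideanLin A).IsSymmetric := isSymmetric_toEuclideanLin_iff.mpr hA
  have heig (i : ι) : toEuclideanLin A (hA.eigenvectorBasis i) =
      hA.eigenvalues i • hA.eigenvectorBasis i := by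
    ext j
    simpa using congrFun (hA.mulVec_eigenvectorBasis i) j
  rw [← real_inner_self_eq_norm_sq, ← hA.eigenvectorBasis.sum_inner_mul_inner v v,
    ← hA.eigenvectorBasis.sum_inner_mul_inner v (toEuclideanLin A v), Finset.mul_sum]
  refine Finset.sum_le_sum fun i _ => ?_
  rw [← hsymm, heig, real_inner_smul_left, real_inner_comm v]
  nlinarith [mul_le_mul_of_nonneg_right (hc i)
    (mul_self_nonneg (inner ℝ v (hA.eigenvectorBasis i)))]

/-- **Grönwall's inequality** in an inner product space, with a one-sided bound on the derivative
along the trajectory, so that the rate `K` may be negative. -/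
theorem norm_le_gronwallBound_of_inner_deriv_le {E : Type*} [NormedAddCommGroup E]
    [InnerProductSpace ℝ E] {f f' : ℝ → E} {K ε a b : ℝ} (hε : 0 ≤ ε)
    (hf : ContinuousOn f (Set.Icc a b))
    (hf' : ∀ x ∈ Set.Ico a b, HasDerivWithinAt f (f' x) (Set.Ici x) x)
    (bound : ∀ x ∈ Set.Ico a b, inner ℝ (f x) (f' x) ≤ K * ‖f x‖ ^ 2 + ε * ‖f x‖) :
    ∀ x ∈ Set.Icc a b, ‖f x‖ ≤ gronwallBound ‖f a‖ K ε (x - a) := by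
  intro x hx
  -- The norm is regularized to `√(‖f‖ ^ 2 + η ^ 2)`, which is differentiable at zeros of `f`.
  have regularized : ∀ η > 0, ‖f x‖ ≤ gronwallBound (√(‖f a‖ ^ 2 + η ^ 2)) K (ε + |K| * η)
      (x - a) := by
    intro η hη
    have hpos (t : ℝ) : 0 < ‖f t‖ ^ 2 + η ^ 2 := by positivity
    refine (Real.le_sqrt_of_sq_le (by nlinarith [sq_nonneg η])).trans
      (le_gronwallBound_of_liminf_deriv_right_le (f := fun t => √(‖f t‖ ^ 2 + η ^ 2))
        (f' := fun t => 2 * inner ℝ (f t) (f' t) / (2 * √(‖f t‖ ^ 2 + η ^ 2)))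
        (by fun_prop) (fun t ht r hr => ?_) le_rfl (fun t ht => ?_) x hx)
    · exact ((((hf' t ht).norm_sq.add_const (η ^ 2)).sqrt
        (hpos t).ne').liminf_right_slope_le hr)
    · have hsq : √(‖f t‖ ^ 2 + η ^ 2) ^ 2 = ‖f t‖ ^ 2 + η ^ 2 := Real.sq_sqrt (hpos t).le
      have hs : 0 < √(‖f t‖ ^ 2 + η ^ 2) := Real.sqrt_pos.mpr (hpos t)
      have hfs : ‖f t‖ ≤ √(‖f t‖ ^ 2 + η ^ 2) :=
        Real.le_sqrt_of_sq_le (by nlinarith [sq_nonneg η])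
      have hηs : η ≤ √(‖f t‖ ^ 2 + η ^ 2) :=
        Real.le_sqrt_of_sq_le (by nlinarith [sq_nonneg ‖f t‖])
      rw [mul_div_mul_left _ _ two_ne_zero, div_le_iff₀ hs]
      have hK : -K * η ^ 2 ≤ |K| * η * √(‖f t‖ ^ 2 + η ^ 2) :=
        calc -K * η ^ 2 ≤ |K| * η ^ 2 := by gcongr; exact neg_le_abs K
          _ = |K| * η * η := by ring
          _ ≤ |K| * η * √(‖f t‖ ^ 2 + η ^ 2) := by gcongr
      linear_combination bound t ht + ε * hfs + hK - K * hsq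
  have hcont : Continuous fun η : ℝ =>
      gronwallBound (√(‖f a‖ ^ 2 + η ^ 2)) K (ε + |K| * η) (x - a) := by
    unfold gronwallBound
    split_ifs <;> fun_prop
  have hlim := (hcont.tendsto 0).mono_left (nhdsWithin_le_nhds (s := Set.Ioi 0))
  simp only [ne_eq, OfNat.ofNat_ne_zero, not_false_eq_true, zero_pow, add_zero, norm_nonneg,
    Real.sqrt_sq, mul_zero] at hlim
  exact ge_of_tendsto hlim (Filter.eventually_of_mem self_mem_nhdsWithin regularized)

/-- Analytic core of the paper's Theorem 1: for the perturbed linear ODE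
`y' = −L y − w` with `L` symmetric positive definite with smallest eigenvalue
`ℓ > 0` and `‖w(t)‖ ≤ D` for `t ≥ 0`, one has
`‖y(t)‖ ≤ e^{−ℓ t}‖y(0)‖ + (D/ℓ)(1 − e^{−ℓ t})` for all `t ≥ 0`. -/
theorem perturbed_linear_ode_norm_bound
    {n : ℕ} (L : Matrix (Fin n) (Fin n) ℝ)
    (hLsymm : L.IsSymm) (hLpd : L.PosDef)
    (ℓ : ℝ) (hℓ : 0 < ℓ)
    (hmin : IsLeast (Set.range hLpd.isHermitian.eigenvalues) ℓ)
    (w y : ℝ → EuclideanSpace ℝ (Fin n))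
    (hw : Continuous w)
    (D : ℝ) (hD : ∀ t, 0 ≤ t → ‖w t‖ ≤ D)
    (hy : ∀ t, 0 ≤ t →
      HasDerivAt y (-(Matrix.toEuclideanLin L (y t)) - w t) t) :
    ∀ t, 0 ≤ t → ‖y t‖ ≤
      Real.exp (-ℓ * t) * ‖y 0‖ + (D / ℓ) * (1 - Real.exp (-ℓ * t)) := by
  intro t ht
  have hD0 : 0 ≤ D := (norm_nonneg _).trans (hD 0 le_rfl)
  have key := norm_le_gronwallBound_of_inner_deriv_le (K := -ℓ) (a := 0) (b := t) hD0
    (fun s hs => (hy s hs.1).continuousAt.continuousWithinAt)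
    (fun s hs => (hy s hs.1).hasDerivWithinAt) (fun s hs => ?_) t ⟨ht, le_rfl⟩
  · rw [gronwallBound_of_K_ne_0 (neg_ne_zero.mpr hℓ.ne')] at key
    simp only [sub_zero, div_neg] at key
    linear_combination key
  · have hL := hLpd.isHermitian.mul_norm_sq_le_inner_toEuclideanLin
      (fun i => hmin.2 (Set.mem_range_self i)) (y s)
    have hwy : -inner ℝ (y s) (w s) ≤ D * ‖y s‖ :=
      calc -inner ℝ (y s) (w s) ≤ ‖y s‖ * ‖w s‖ :=
            (neg_le_abs _).trans (abs_real_inner_le_norm _ _)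
        _ ≤ ‖y s‖ * D := by gcongr; exact hD s hs.1
        _ = D * ‖y s‖ := mul_comm _ _
    rw [inner_sub_right, inner_neg_right]
    linear_combination hL + hwy
end

section
/- Let L be a symmetric positive-definite n×n real matrix whose smallest eigenvalue is ℓ > 0. Let x, ξ, d, F : ℝ → ℝⁿ with x, ξ, d differentiable, x'(t) = F(t) + d(t), ξ'(t) = −L(ξ(t) + L x(t) + F(t)), and d̂ = L x + ξ. If ‖d'(t)‖ ≤ D for all t ≥ 0, then for all t ≥ 0, ‖d̂(t) − d(t)‖ ≤ e^{−ℓ t} ‖d̂(0) − d(0)‖ + (D/ℓ)(1 − e^{−ℓ t}). -/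
open Matrix

/-- Rayleigh bound: a lower bound on the eigenvalues of a real Hermitian matrix bounds its
quadratic form from below. -/
theorem Matrix.IsHermitian.mul_norm_sq_le_inner {ι : Type*} [Fintype ι] [DecidableEq ι]
    {A : Matrix ι ι ℝ} (hA : A.IsHermitian) {c : ℝ} (hc : ∀ i, c ≤ hA.eigenvalues i)
    (v : EuclideanSpace ℝ ι) : c * ‖v‖ ^ 2 ≤ inner ℝ v (Matrix.toEuclideanLin A v) := by
  have hsymm := Matrix.isSymmetric_toEuclideanLin_iff.2 hA
  set b := hA.eigenvectorBasis
  have hAb : ∀ i, Matrix.toEuclideanLin A (b i) = hA.eigenvalues i • b i := by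
    intro i
    ext j
    have := congrFun (hA.mulVec_eigenvectorBasis i) j
    simpa [Matrix.toLpLin_apply] using this
  rw [← real_inner_self_eq_norm_sq, ← b.sum_inner_mul_inner v v,
    ← b.sum_inner_mul_inner v (Matrix.toEuclideanLin A v), Finset.mul_sum]
  refine Finset.sum_le_sum fun i _ => ?_
  rw [← hsymm (b i) v, hAb, real_inner_smul_left, real_inner_comm v (b i)]
  nlinarith [mul_le_mul_of_nonneg_right (hc i) (mul_self_nonneg (inner ℝ v (b i)))]

/-- A curve with `⟪e, e'⟫ ≤ -c ‖e‖² + D ‖e‖` satisfies the comparison bound for the scalar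
equation `y' = -c y + D`. -/
theorem norm_le_exp_of_inner_deriv_le {E : Type*} [NormedAddCommGroup E] [InnerProductSpace ℝ E]
    {e e' : ℝ → E} {c D : ℝ} (hc : 0 < c) (hD : 0 ≤ D)
    (he : ∀ t, HasDerivAt e (e' t) t)
    (hle : ∀ t, 0 ≤ t → inner ℝ (e t) (e' t) ≤ -c * ‖e t‖ ^ 2 + D * ‖e t‖)
    {t : ℝ} (ht : 0 ≤ t) :
    ‖e t‖ ≤ Real.exp (-c * t) * ‖e 0‖ + (D / c) * (1 - Real.exp (-c * t)) := by
  refine le_of_forall_pos_le_add fun ε hε => ?_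
  -- regularise the norm, which is not differentiable at the origin
  set s : ℝ → ℝ := fun u => √(‖e u‖ ^ 2 + ε ^ 2)
  have hpos : ∀ u, 0 < ‖e u‖ ^ 2 + ε ^ 2 := fun u => by positivity
  have hspos : ∀ u, 0 < s u := fun u => Real.sqrt_pos.2 (hpos u)
  have hsq : ∀ u, s u ^ 2 = ‖e u‖ ^ 2 + ε ^ 2 := fun u => Real.sq_sqrt (hpos u).le
  have hes : ∀ u, ‖e u‖ ≤ s u := fun u => Real.le_sqrt_of_sq_le (by nlinarith)
  have hεs : ∀ u, ε ≤ s u := fun u => Real.le_sqrt_of_sq_le (by nlinarith [sq_nonneg ‖e u‖])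
  have hsd : ∀ u, HasDerivAt s (inner ℝ (e u) (e' u) / s u) u := fun u => by
    refine (((he u).norm_sq.add_const (ε ^ 2)).sqrt (hpos u).ne').congr_deriv ?_
    rw [mul_div_mul_left _ _ two_ne_zero]
  have hgd : ∀ u, HasDerivAt (fun u => (s u - (D / c + ε)) * Real.exp (c * u))
      ((inner ℝ (e u) (e' u) / s u + c * (s u - (D / c + ε))) * Real.exp (c * u)) u := fun u => by
    refine (((hsd u).sub_const _).mul ((hasDerivAt_id u).const_mul c).exp).congr_deriv ?_
    simp only [id, mul_one]
    ring
  have hanti : AntitoneOn (fun u => (s u - (D / c + ε)) * Real.exp (c * u)) (Set.Ici 0) := by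
    refine antitoneOn_of_deriv_nonpos (convex_Ici 0)
      (fun u _ => (hgd u).continuousAt.continuousWithinAt)
      (fun u _ => (hgd u).differentiableAt.differentiableWithinAt) fun u hu => ?_
    rw [interior_Ici, Set.mem_Ioi] at hu
    rw [(hgd u).deriv]
    refine mul_nonpos_of_nonpos_of_nonneg ?_ (Real.exp_pos _).le
    have hquot : inner ℝ (e u) (e' u) / s u ≤ -c * s u + D + c * ε := by
      rw [div_le_iff₀ (hspos u)]
      have h₁ := mul_le_mul_of_nonneg_left (hes u) hD
      have h₂ := mul_le_mul_of_nonneg_left (hεs u) (mul_pos hc hε).le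
      have h₃ : c * s u ^ 2 = c * (‖e u‖ ^ 2 + ε ^ 2) := by rw [hsq]
      linarith [hle u hu.le]
    have : c * (D / c) = D := mul_div_cancel₀ D hc.ne'
    linarith
  have hmono := hanti Set.self_mem_Ici ht ht
  have hs0 : s 0 ≤ ‖e 0‖ + ε :=
    Real.sqrt_le_iff.2 ⟨by positivity, by nlinarith [mul_nonneg (norm_nonneg (e 0)) hε.le]⟩
  have hexp : Real.exp (c * t) * Real.exp (-c * t) = 1 := by
    rw [← Real.exp_add]; simp
  have hmul := mul_le_mul_of_nonneg_right hmono (Real.exp_pos (-c * t)).le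
  simp only [mul_assoc, hexp, mul_zero, Real.exp_zero, mul_one] at hmul
  have := mul_le_mul_of_nonneg_right hs0 (Real.exp_pos (-c * t)).le
  linarith [hes t]

/-- First-order disturbance observer (the special case of the paper's
feedback-calibration mechanism with `d_model = 0`): for `x' = F + d`,
`ξ' = −L(ξ + L x + F)`, `d̂ = L x + ξ`, with `L` symmetric positive definite
with smallest eigenvalue `ℓ > 0` and `‖d'(t)‖ ≤ D` for `t ≥ 0`,
`‖d̂(t) − d(t)‖ ≤ e^{−ℓ t}‖d̂(0) − d(0)‖ + (D/ℓ)(1 − e^{−ℓ t})`. -/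
theorem first_order_observer_error_bound
    {n : ℕ} (L : Matrix (Fin n) (Fin n) ℝ)
    (hLsymm : L.IsSymm) (hLpd : L.PosDef)
    (ℓ : ℝ) (hℓ : 0 < ℓ)
    (hmin : IsLeast (Set.range hLpd.isHermitian.eigenvalues) ℓ)
    (x ξ d d' F dhat : ℝ → EuclideanSpace ℝ (Fin n))
    (hd : ∀ t, HasDerivAt d (d' t) t)
    (hx : ∀ t, HasDerivAt x (F t + d t) t)
    (hξ : ∀ t, HasDerivAt ξ
      (-(Matrix.toEuclideanLin L (ξ t + Matrix.toEuclideanLin L (x t) + F t))) t)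
    (hdhat : ∀ t, dhat t = Matrix.toEuclideanLin L (x t) + ξ t)
    (D : ℝ) (hD : ∀ t, 0 ≤ t → ‖d' t‖ ≤ D) :
    ∀ t, 0 ≤ t → ‖dhat t - d t‖ ≤
      Real.exp (-ℓ * t) * ‖dhat 0 - d 0‖ + (D / ℓ) * (1 - Real.exp (-ℓ * t)) := by
  intro t ht
  have hderiv : ∀ u, HasDerivAt (fun u => dhat u - d u)
      (-(Matrix.toEuclideanLin L (dhat u - d u)) - d' u) u := fun u => by
    rw [funext hdhat]
    have hLx : HasDerivAt (fun u => Matrix.toEuclideanLin L (x u))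
        (Matrix.toEuclideanLin L (F u + d u)) u :=
      (Matrix.toEuclideanLin L).toContinuousLinearMap.hasFDerivAt.comp_hasDerivAt u (hx u)
    refine ((hLx.add (hξ u)).sub (hd u)).congr_deriv ?_
    simp only [map_add, map_sub]
    abel
  refine norm_le_exp_of_inner_deriv_le hℓ ((norm_nonneg _).trans (hD 0 le_rfl)) hderiv
    (fun u hu => ?_) ht
  have hquad := hLpd.isHermitian.mul_norm_sq_le_inner
    (fun i => hmin.2 (Set.mem_range_self i)) (dhat u - d u)
  have hdist : -inner ℝ (dhat u - d u) (d' u) ≤ D * ‖dhat u - d u‖ :=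
    calc -inner ℝ (dhat u - d u) (d' u) ≤ ‖dhat u - d u‖ * ‖d' u‖ :=
          (neg_le_abs _).trans (abs_real_inner_le_norm _ _)
      _ ≤ D * ‖dhat u - d u‖ := by
          rw [mul_comm]
          exact mul_le_mul_of_nonneg_right (hD u hu) (norm_nonneg _)
  rw [inner_sub_right, inner_neg_right]
  linarith
end
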